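/- For fixed positive reals y ≠ z, the function K ↦ (K(y−z) − z(1−(z/y)^K))/(y−z)^2, extended to real K ≥ 0, is strictly increasing in K. -/

import Mathlib

/-!
Up to an additive constant and the positive factor `z / (y - z) ^ 2`, the function is
`K ↦ x ^ K + c * K` with `x = z / y` and `c = y / z - 1`. By convexity the slope of `K ↦ x ^ K`
on `[0, ∞)` is at least `log x`, its slope at `0`, and `log x + c > 0` is the strict inequality
`log t < t - 1` at `t = y / z ≠ 1`.
-/

section RpowSlope

variable {x : ℝ}

theorem mul_log_le_rpow_sub_one (hx : 0 < x) (t : ℝ) : t * Real.log x ≤ x ^ t - 1 := by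
  rw [← Real.log_rpow hx]
  exact Real.log_le_sub_one_of_pos (Real.rpow_pos_of_pos hx t)

theorem log_le_rpow_mul_log (hx : 0 < x) {t : ℝ} (ht : 0 ≤ t) :
    Real.log x ≤ x ^ t * Real.log x := by
  rcases le_total x 1 with hx1 | hx1
  · exact le_mul_of_le_one_left (Real.log_nonpos hx.le hx1) (Real.rpow_le_one hx.le hx1 ht)
  · exact le_mul_of_one_le_left (Real.log_nonneg hx1) (Real.one_le_rpow hx1 ht)

theorem sub_mul_log_le_rpow_sub_rpow (hx : 0 < x) {s t : ℝ} (hs : 0 ≤ s) (hst : s ≤ t) :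
    (t - s) * Real.log x ≤ x ^ t - x ^ s :=
  calc (t - s) * Real.log x
      ≤ (t - s) * (x ^ s * Real.log x) :=
        mul_le_mul_of_nonneg_left (log_le_rpow_mul_log hx hs) (sub_nonneg.mpr hst)
    _ = x ^ s * ((t - s) * Real.log x) := mul_left_comm _ _ _
    _ ≤ x ^ s * (x ^ (t - s) - 1) :=
        mul_le_mul_of_nonneg_left (mul_log_le_rpow_sub_one hx _) (Real.rpow_nonneg hx.le s)
    _ = x ^ t - x ^ s := by rw [mul_sub_one, ← Real.rpow_add hx, add_sub_cancel]

theorem strictMonoOn_rpow_add_mul (hx : 0 < x) {c : ℝ} (hc : -Real.log x < c) :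
    StrictMonoOn (fun t : ℝ => x ^ t + c * t) (Set.Ici 0) := by
  intro s hs t _ hst
  have rpow_increment : (t - s) * Real.log x ≤ x ^ t - x ^ s :=
    sub_mul_log_le_rpow_sub_rpow hx hs hst.le
  have linear_increment : (t - s) * -Real.log x < (t - s) * c :=
    mul_lt_mul_of_pos_left hc (sub_pos.mpr hst)
  dsimp only
  linarith

end RpowSlope

/-- For fixed positive reals `y ≠ z`, the extension of Naor's threshold-value function
`K ↦ (K(y−z) − z(1−(z/y)^K))/(y−z)²` to real `K ≥ 0` is strictly increasing. -/
theorem stmt_0 (y z : ℝ) (hy : 0 < y) (hz : 0 < z) (hne : y ≠ z) :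
    StrictMonoOn
      (fun K : ℝ => (K * (y - z) - z * (1 - (z / y) ^ K)) / (y - z) ^ 2)
      (Set.Ici (0 : ℝ)) := by
  have neg_log_lt : -Real.log (z / y) < y / z - 1 := by
    rw [← Real.log_inv, inv_div]
    exact Real.log_lt_sub_one_of_pos (div_pos hy hz) (div_ne_one_of_ne hne)
  have numerator_eq (K : ℝ) : K * (y - z) - z * (1 - (z / y) ^ K) =
      z * ((z / y) ^ K + (y / z - 1) * K) - z := by
    field_simp
    ring
  intro a ha b hb hab
  have core_lt := strictMonoOn_rpow_add_mul (div_pos hz hy) neg_log_lt ha hb hab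
  simp only [numerator_eq]
  exact div_lt_div_of_pos_right (sub_lt_sub_right (mul_lt_mul_of_pos_left core_lt hz) z)
    (sq_pos_of_ne_zero (sub_ne_zero.mpr hne))
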